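/- Let k₀ ∈ ℝ^{m₁} × ℝ^{m₂} be fixed. Let Ψ₁ : B̄^{m₁}(0,1) × {0} → ℝ^{m₁} × ℝ^{m₂} and Ψ₂ : {0} × B̄^{m₂}(0,1) → ℝ^{m₁} × ℝ^{m₂} be continuous maps satisfying ‖Ψ₁(r) - (r + k₀)‖ ≤ 1/4 for all r in B̄^{m₁}(0,1) × {0}, and ‖Ψ₂(s) - (s + k₀)‖ ≤ 1/4 for all s in {0} × B̄^{m₂}(0,1). Then the images of Ψ₁ and Ψ₂ have nonempty intersection. -/

import Mathlib

open Set Metric MeasureTheory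

/-- Interpolation of `det (1 + A)` from `det (1 + t A)` at small nodes. -/
lemma aux_interp {E : Type*} [NormedAddCommGroup E] [NormedSpace ℝ E] [FiniteDimensional ℝ E]
    (s : Finset ℝ) (hs : Module.finrank ℝ E < s.card) (A : E →L[ℝ] E) :
    (ContinuousLinearMap.id ℝ E + A).det =
      ∑ t ∈ s, (Lagrange.basis s id t).eval 1 * (ContinuousLinearMap.id ℝ E + t • A).det := by
  classical
  let b := Module.finBasis ℝ E
  let M := LinearMap.toMatrix b b (A : E →ₗ[ℝ] E)
  let p : Polynomial ℝ := Matrix.det ((Polynomial.X : Polynomial ℝ) • M.map Polynomial.C +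
    (1 : Matrix _ _ ℝ).map Polynomial.C)
  have hev : ∀ t : ℝ, p.eval t = (ContinuousLinearMap.id ℝ E + t • A).det := by
    intro t
    rw [ContinuousLinearMap.det, ← LinearMap.det_toMatrix b]
    simp only [p]
    rw [← Polynomial.coe_evalRingHom, RingHom.map_det]
    congr 1
    have h1 : LinearMap.toMatrix b b
        ((ContinuousLinearMap.id ℝ E + t • A : E →L[ℝ] E) : E →ₗ[ℝ] E) = 1 + t • M := by
      rw [ContinuousLinearMap.toLinearMap_add, ContinuousLinearMap.toLinearMap_smul, map_add, map_smul,
        ContinuousLinearMap.coe_id, LinearMap.toMatrix_id]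
    rw [h1]
    ext i j
    simp only [Matrix.one_apply, RingHom.mapMatrix_apply, Matrix.map_apply, Matrix.add_apply,
      Matrix.smul_apply, smul_eq_mul]
    split_ifs <;> simp <;> ring
  have hdeg : p.degree < s.card := by
    refine lt_of_le_of_lt Polynomial.degree_le_natDegree ?_
    have := Polynomial.natDegree_det_X_add_C_le M 1
    rw [Fintype.card_fin] at this
    exact_mod_cast lt_of_le_of_lt this hs
  have h := Lagrange.eq_interpolate (s := s) (v := id) (f := p) (Function.injective_id.injOn) hdeg
  have h1 := congrArg (Polynomial.eval 1) h
  rw [hev, Lagrange.interpolate_apply, Polynomial.eval_finsetSum] at h1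
  rw [one_smul] at h1
  rw [h1]
  refine Finset.sum_congr rfl fun t _ => ?_
  rw [Polynomial.eval_mul, Polynomial.eval_C, ← hev, mul_comm]; rfl

lemma aux_sum_basis (s : Finset ℝ) (hs : s.Nonempty) :
    ∑ t ∈ s, (Lagrange.basis s id t).eval 1 = 1 := by
  rw [← Polynomial.eval_finsetSum, Lagrange.sum_basis Function.injective_id.injOn hs]
  simp

lemma aux_det_pos {E : Type*} [NormedAddCommGroup E] [NormedSpace ℝ E] [FiniteDimensional ℝ E]
    (A : E →L[ℝ] E) (hA : ‖A‖ < 1) : 0 < (ContinuousLinearMap.id ℝ E + A).det := by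
  have hne : ∀ s ∈ Icc (0:ℝ) 1, (ContinuousLinearMap.id ℝ E + s • A).det ≠ 0 := by
    intro s hs h0
    have : ¬ Function.Injective (ContinuousLinearMap.id ℝ E + s • A : E →L[ℝ] E) := by
      intro hinj
      have h3 := LinearMap.bot_lt_ker_of_det_eq_zero (f := ((ContinuousLinearMap.id ℝ E + s • A : E →L[ℝ] E) : E →ₗ[ℝ] E)) h0
      rw [LinearMap.ker_eq_bot.2 hinj] at h3
      exact lt_irrefl _ h3
    apply this
    rw [injective_iff_map_eq_zero]
    intro x hx
    by_contra hx0
    have h1 : x = - (s • A x) := by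
      simpa using eq_neg_of_add_eq_zero_left hx
    have h2 : ‖x‖ ≤ ‖A‖ * ‖x‖ := by
      calc ‖x‖ = ‖s • A x‖ := by conv_lhs => rw [h1, norm_neg]
        _ = s * ‖A x‖ := by rw [norm_smul, Real.norm_of_nonneg hs.1]
        _ ≤ 1 * ‖A x‖ := by gcongr; exact hs.2
        _ ≤ _ := by rw [one_mul]; exact A.le_opNorm x
    have : 0 < ‖x‖ := norm_pos_iff.2 hx0
    nlinarith
  have hcont : Continuous fun s : ℝ => (ContinuousLinearMap.id ℝ E + s • A).det :=
    ContinuousLinearMap.continuous_det.comp (by fun_prop)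
  by_contra hneg
  push Not at hneg
  have := intermediate_value_Icc' (zero_le_one' ℝ) hcont.continuousOn
  obtain ⟨s, hs, hs0⟩ := this (show (0:ℝ) ∈ _ from ⟨by simpa using hneg, by simp [ContinuousLinearMap.det]⟩)
  exact hne s hs hs0

lemma aux_lip {E : Type*} [NormedAddCommGroup E] [NormedSpace ℝ E]
    (h : E → E) (K : NNReal) (hL : LipschitzOnWith K h (closedBall 0 2))
    (h0 : ∀ x, ‖x‖ = 2 → h x = 0) :
    LipschitzWith K ((closedBall (0:E) 2).indicator h) := by
  have key : ∀ x y : E, ‖x‖ ≤ 2 → 2 < ‖y‖ → ‖h x‖ ≤ K * ‖x - y‖ := by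
    intro x y hx hy
    obtain ⟨t, ht, hz⟩ : (2:ℝ) ∈ (fun t : ℝ => ‖x + t • (y - x)‖) '' Icc 0 1 :=
      intermediate_value_Icc (zero_le_one' ℝ) (by fun_prop) ⟨by simpa using hx, by simpa using hy.le⟩
    have := hL.dist_le_mul x (by simpa using hx) (x + t • (y - x)) (by simpa using hz.le)
    rw [h0 _ hz, dist_zero_right, dist_eq_norm] at this
    refine this.trans ?_
    gcongr
    rw [sub_add_cancel_left, norm_neg, norm_smul, Real.norm_of_nonneg ht.1, norm_sub_rev y x]
    exact mul_le_of_le_one_left (norm_nonneg _) ht.2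
  refine LipschitzWith.of_dist_le_mul fun x y => ?_
  rw [dist_eq_norm, dist_eq_norm]
  by_cases hx : x ∈ closedBall (0:E) 2 <;> by_cases hy : y ∈ closedBall (0:E) 2
  · rw [indicator_of_mem hx, indicator_of_mem hy, ← dist_eq_norm, ← dist_eq_norm]
    exact hL.dist_le_mul x hx y hy
  · rw [indicator_of_mem hx, indicator_of_notMem hy, sub_zero]
    exact key x y (by simpa using hx) (by simpa using hy)
  · rw [indicator_of_mem hy, indicator_of_notMem hx, zero_sub, norm_neg, norm_sub_rev]
    exact key y x (by simpa using hy) (by simpa using hx)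
  · rw [indicator_of_notMem hx, indicator_of_notMem hy]; simp; positivity

lemma aux_no_retraction {E : Type*} [NormedAddCommGroup E] [InnerProductSpace ℝ E]
    [FiniteDimensional ℝ E] (r : E → E) (hr : ContDiff ℝ 1 r) (hn : ∀ x, ‖r x‖ = 2)
    (hid : ∀ x, ‖x‖ = 2 → r x = x) : False := by
  borelize E
  let μ : Measure E := Measure.addHaar
  let B := closedBall (0:E) 2
  let h : E → E := fun x => r x - x
  have hh : ContDiff ℝ 1 h := hr.sub contDiff_id
  have hdiff : Differentiable ℝ h := hh.differentiable one_ne_zero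
  have hBc : IsCompact B := isCompact_closedBall _ _
  have hfc : Continuous (fderiv ℝ h) := hh.continuous_fderiv one_ne_zero
  obtain ⟨K, hK⟩ : ∃ K : NNReal, ∀ x ∈ B, ‖fderiv ℝ h x‖₊ ≤ K := by
    obtain ⟨C, hC⟩ := hBc.exists_bound_of_continuousOn hfc.continuousOn
    exact ⟨C.toNNReal, fun x hx => by
      rw [← NNReal.coe_le_coe, coe_nnnorm]; exact (hC x hx).trans (Real.le_coe_toNNReal C)⟩
  have hL : LipschitzOnWith K h B :=
    (convex_closedBall _ _).lipschitzOnWith_of_nnnorm_fderiv_le (fun x _ => hdiff x) hK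
  have hL' := aux_lip h K hL (fun x hx => by simp [h, hid x hx])
  have hd : ∀ x (t : ℝ), HasFDerivAt (fun x => x + t • h x)
      (ContinuousLinearMap.id ℝ E + t • fderiv ℝ h x) x := fun x t =>
    (hasFDerivAt_id x).add ((hdiff x).hasFDerivAt.const_smul t)
  -- volume identity for small `t`
  have hvol : ∀ t : ℝ, 0 < t → t * (K + 1) ≤ 1 / 2 →
      ∫ x in B, (ContinuousLinearMap.id ℝ E + t • fderiv ℝ h x).det ∂μ = μ.real B := by
    intro t ht htK
    have hKn : (0:ℝ) ≤ K := K.2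
    let G : E → E := fun x => x + t • B.indicator h x
    have hG : ApproximatesLinearOn G ((ContinuousLinearEquiv.refl ℝ E : E ≃L[ℝ] E) : E →L[ℝ] E) univ
        (t.toNNReal * K) := by
      rw [ApproximatesLinearOn.approximatesLinearOn_iff_lipschitzOnWith]
      refine LipschitzOnWith.of_dist_le_mul fun x _ y _ => ?_
      have := hL'.dist_le_mul x y
      simp only [G, Pi.sub_apply, ContinuousLinearEquiv.coe_coe, ContinuousLinearEquiv.refl_apply, add_sub_cancel_left]
      rw [dist_smul₀, Real.norm_of_nonneg ht.le, NNReal.coe_mul, Real.coe_toNNReal _ ht.le, mul_assoc]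
      gcongr
    have hc : Subsingleton E ∨ (t.toNNReal * K) <
        ‖(((ContinuousLinearEquiv.refl ℝ E : E ≃L[ℝ] E)).symm : E →L[ℝ] E)‖₊⁻¹ := by
      rcases subsingleton_or_nontrivial E with hE | hE
      · exact Or.inl hE
      · right
        have : ‖(((ContinuousLinearEquiv.refl ℝ E : E ≃L[ℝ] E)).symm : E →L[ℝ] E)‖₊ = 1 := by
          simp
        rw [this, ← NNReal.coe_lt_coe, NNReal.coe_mul, Real.coe_toNNReal _ ht.le]
        simp
        nlinarith
    have hinj : Function.Injective G := by
      have := hG.injOn hc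
      rwa [injOn_univ] at this
    have hsurj : Function.Surjective G := hG.surjective hc
    have hout : ∀ x, x ∉ B → G x = x := fun x hx => by simp [G, hx]
    have himg : G '' B = B := by
      ext y
      constructor
      · rintro ⟨x, hx, rfl⟩
        by_contra hcon
        have := hinj (hout _ hcon)
        rw [this] at hcon
        exact hcon hx
      · intro hy
        obtain ⟨x, rfl⟩ := hsurj y
        refine ⟨x, ?_, rfl⟩
        by_contra hcon
        rw [hout x hcon] at hy
        exact hcon hy
    have heq : EqOn G (fun x => x + t • h x) B := fun x hx => by simp [G, hx]
    have himg' : (fun x => x + t • h x) '' B = B := by rw [← heq.image_eq, himg]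
    have hinj' : InjOn (fun x => x + t • h x) B := hinj.injOn.congr heq
    have := integral_image_eq_integral_abs_det_fderiv_smul μ (s := B) isClosed_closedBall.measurableSet
      (fun x _ => (hd x t).hasFDerivWithinAt) hinj' (fun _ => (1:ℝ))
    rw [himg'] at this
    simp only [smul_eq_mul, mul_one, integral_const, MeasurableSet.univ, measureReal_restrict_apply, univ_inter] at this
    rw [this]
    refine setIntegral_congr_fun isClosed_closedBall.measurableSet fun x hx => ?_
    refine (abs_of_pos (aux_det_pos _ ?_)).symm
    rw [norm_smul, Real.norm_of_nonneg ht.le]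
    have : ‖fderiv ℝ h x‖ ≤ K := hK x hx
    nlinarith
  have hdet : ∀ x, (ContinuousLinearMap.id ℝ E + fderiv ℝ h x).det = 0 := by
    intro x
    have hrd : HasFDerivAt r (ContinuousLinearMap.id ℝ E + fderiv ℝ h x) x := by
      have := hd x 1
      simpa [h] using this
    by_contra hne
    have hsurj : Function.Surjective (ContinuousLinearMap.id ℝ E + fderiv ℝ h x : E →L[ℝ] E) := by
      have := (LinearMap.equivOfDetNeZero _ hne).surjective
      exact this
    obtain ⟨v, hv⟩ := hsurj (r x)
    have h1 := hrd.norm_sq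
    have h2 : HasFDerivAt (fun y => ‖r y‖ ^ 2) (0 : E →L[ℝ] ℝ) x := by
      simp only [hn]; exact hasFDerivAt_const _ _
    have h3 := congrArg (fun L : E →L[ℝ] ℝ => L v) (h1.unique h2)
    have h4 : 2 * inner ℝ (r x)
      ((ContinuousLinearMap.id ℝ E + fderiv ℝ h x : E →L[ℝ] E) v) = 0 := by
      have h5 : 2 * inner ℝ (r x) v + 2 * inner ℝ (r x) ((fderiv ℝ h x) v) = 0 := by
        simpa using h3
      rw [← mul_add, ← inner_add_right] at h5
      exact h5
    rw [hv, real_inner_self_eq_norm_sq, hn] at h4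
    norm_num at h4
  obtain ⟨s, hs1, hs2⟩ : ∃ s : Finset ℝ, (↑s ⊆ Ioc (0:ℝ) (1 / 2 / (K + 1))) ∧
      s.card = Module.finrank ℝ E + 1 :=
    (Ioc_infinite (by positivity)).exists_subset_card_eq _
  have hint : ∀ t : ℝ, IntegrableOn
      (fun x => (ContinuousLinearMap.id ℝ E + t • fderiv ℝ h x).det) B μ := fun t =>
    (ContinuousOn.integrableOn_compact hBc
      (ContinuousLinearMap.continuous_det.comp (by fun_prop)).continuousOn)
  have hfin : (0:ℝ) = μ.real B := by
    calc (0:ℝ) = ∫ x in B, (ContinuousLinearMap.id ℝ E + fderiv ℝ h x).det ∂μ := by simp [hdet]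
      _ = ∫ x in B, ∑ t ∈ s, (Lagrange.basis s id t).eval 1 *
          (ContinuousLinearMap.id ℝ E + t • fderiv ℝ h x).det ∂μ := by
        congr 1; ext x; exact aux_interp s (by omega) _
      _ = ∑ t ∈ s, (Lagrange.basis s id t).eval 1 *
          ∫ x in B, (ContinuousLinearMap.id ℝ E + t • fderiv ℝ h x).det ∂μ := by
        rw [integral_finsetSum _ (fun t _ => (hint t).const_mul _)]
        simp only [integral_const_mul]
      _ = ∑ t ∈ s, (Lagrange.basis s id t).eval 1 * μ.real B := by
        refine Finset.sum_congr rfl fun t ht => ?_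
        have := hs1 ht
        rw [hvol t this.1 ((le_div_iff₀ (by positivity)).1 this.2)]
      _ = μ.real B := by
        rw [← Finset.sum_mul, aux_sum_basis s (Finset.card_pos.1 (by omega)), one_mul]
  have hpos : 0 < μ.real B := by
    rw [measureReal_def, ENNReal.toReal_pos_iff]
    exact ⟨measure_closedBall_pos _ _ (by norm_num), hBc.measure_lt_top⟩
  linarith

lemma aux_brouwer {E : Type*} [NormedAddCommGroup E] [InnerProductSpace ℝ E]
    [FiniteDimensional ℝ E] (f : E → E) (hf : Continuous f) (hb : ∀ x, ‖f x‖ ≤ 1) :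
    ∃ x, f x = x := by
  by_contra! hne
  obtain ⟨ε, hε, hε2, hεb⟩ : ∃ ε : ℝ, 0 < ε ∧ ε ≤ 1/4 ∧ ∀ x ∈ closedBall (0:E) 2, 2 * ε ≤ ‖x - f x‖ := by
    obtain ⟨x0, hx0, hmin⟩ := (isCompact_closedBall (0:E) 2).exists_isMinOn ⟨0, by simp⟩
      (f := fun x => ‖x - f x‖) (by fun_prop)
    have hp : 0 < ‖x0 - f x0‖ := norm_pos_iff.2 (sub_ne_zero.2 (hne x0).symm)
    refine ⟨min (1/4) (‖x0 - f x0‖ / 2), by positivity, min_le_left _ _, fun x hx => ?_⟩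
    have := hmin hx
    simp only [mem_ofPred_eq] at this
    have h2 := min_le_right (1/4) (‖x0 - f x0‖ / 2)
    linarith
  have huc := (isCompact_closedBall (0:E) 3).uniformContinuousOn_of_continuous hf.continuousOn
  obtain ⟨δ, hδ, hδf⟩ := Metric.uniformContinuousOn_iff.1 huc ε hε
  obtain ⟨g, hg, hgf⟩ := hf.exists_contDiff_dist_le_of_forall_mem_ball_dist_le
    (ε := min δ 1) (by positivity)
  have hgf' : ∀ x ∈ closedBall (0:E) 2, ‖g x - f x‖ ≤ ε := by
    intro x hx
    rw [← dist_eq_norm]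
    refine hgf x ε fun y hy => ?_
    rw [mem_ball, lt_min_iff] at hy
    rw [mem_closedBall] at hx
    refine (hδf y ?_ x ?_ hy.1).le
    · rw [mem_closedBall]
      linarith [dist_triangle y x 0]
    · rw [mem_closedBall]; linarith
  let χ : ContDiffBump (0:E) := ⟨3/2, 2, by norm_num, by norm_num⟩
  let u : E → E := fun x => x - χ x • g x
  have hu : ContDiff ℝ 1 u := by
    have hg1 : ContDiff ℝ 1 g := hg.of_le (by exact_mod_cast le_top)
    exact contDiff_id.sub (χ.contDiff.smul hg1)
  have hu2 : ∀ x, 2 ≤ ‖x‖ → u x = x := by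
    intro x hx
    have : χ x = 0 := χ.zero_of_le_dist (by simpa [χ] using hx)
    simp [u, this]
  have hu0 : ∀ x, u x ≠ 0 := by
    intro x h0
    rcases le_total 2 ‖x‖ with h2 | h2
    · rw [hu2 x h2] at h0
      rw [h0] at h2; simp at h2; linarith
    have hxB : x ∈ closedBall (0:E) 2 := by simpa using h2
    have hgx := hgf' x hxB
    rcases le_or_gt ‖x‖ (3/2) with h3 | h3
    · have h1 : χ x = 1 := χ.one_of_mem_closedBall (by simpa [χ] using h3)
      simp only [u, h1, one_smul] at h0
      rw [sub_eq_zero] at h0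
      rw [← h0] at hgx
      linarith [hεb x hxB]
    · have hx : x = χ x • g x := sub_eq_zero.1 h0
      have : ‖x‖ ≤ ‖g x‖ := by
        conv_lhs => rw [hx]
        rw [norm_smul, Real.norm_of_nonneg χ.nonneg]
        exact mul_le_of_le_one_left (norm_nonneg _) χ.le_one
      have h4 := norm_le_norm_add_norm_sub (f x) (g x)
      rw [norm_sub_rev] at h4
      linarith [hb x]
  refine aux_no_retraction (fun x => (2 / ‖u x‖) • u x) ?_ ?_ ?_
  · exact (contDiff_const.div (hu.norm ℝ hu0) (fun x => norm_ne_zero_iff.2 (hu0 x))).smul hu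
  · intro x
    have := norm_pos_iff.2 (hu0 x)
    rw [norm_smul, Real.norm_of_nonneg (by positivity)]
    field_simp
  · intro x hx
    simp only [hu2 x hx.ge, hx]
    norm_num

/-- Retraction to the unit ball. -/
noncomputable def auxProj {E : Type*} [NormedAddCommGroup E] [NormedSpace ℝ E] (x : E) : E :=
  (max 1 ‖x‖)⁻¹ • x

lemma auxProj_cont {E : Type*} [NormedAddCommGroup E] [NormedSpace ℝ E] :
    Continuous (auxProj : E → E) := by
  unfold auxProj
  refine Continuous.smul (Continuous.inv₀ (by fun_prop) fun x => ?_) continuous_id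
  positivity

lemma auxProj_mem {E : Type*} [NormedAddCommGroup E] [NormedSpace ℝ E] (x : E) :
    auxProj x ∈ closedBall (0:E) 1 := by
  have : 0 < max 1 ‖x‖ := by positivity
  rw [mem_closedBall_zero_iff, auxProj, norm_smul, norm_inv, Real.norm_of_nonneg this.le,
    inv_mul_le_iff₀ this, mul_one]
  exact le_max_right _ _

lemma auxProj_id {E : Type*} [NormedAddCommGroup E] [NormedSpace ℝ E] (x : E) (hx : ‖x‖ ≤ 1) :
    auxProj x = x := by
  simp [auxProj, max_eq_left hx]

lemma aux_main {E₁ E₂ : Type*} [NormedAddCommGroup E₁] [InnerProductSpace ℝ E₁]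
    [FiniteDimensional ℝ E₁] [NormedAddCommGroup E₂] [InnerProductSpace ℝ E₂]
    [FiniteDimensional ℝ E₂]
    (k₀ : E₁ × E₂)
    (Ψ₁ Ψ₂ : E₁ × E₂ →
      E₁ × E₂)
    (hc₁ : ContinuousOn Ψ₁ {x | x.1 ∈ Metric.closedBall 0 1 ∧ x.2 = 0})
    (hc₂ : ContinuousOn Ψ₂ {x | x.1 = 0 ∧ x.2 ∈ Metric.closedBall 0 1})
    (h₁ : ∀ r : E₁ × E₂,
      r.1 ∈ Metric.closedBall 0 1 → r.2 = 0 →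
      ‖(Ψ₁ r).1 - (r.1 + k₀.1)‖ + ‖(Ψ₁ r).2 - (r.2 + k₀.2)‖ ≤ 1 / 4)
    (h₂ : ∀ s : E₁ × E₂,
      s.1 = 0 → s.2 ∈ Metric.closedBall 0 1 →
      ‖(Ψ₂ s).1 - (s.1 + k₀.1)‖ + ‖(Ψ₂ s).2 - (s.2 + k₀.2)‖ ≤ 1 / 4) :
    ((Ψ₁ '' {x | x.1 ∈ Metric.closedBall 0 1 ∧ x.2 = 0}) ∩
      (Ψ₂ '' {x | x.1 = 0 ∧ x.2 ∈ Metric.closedBall 0 1})).Nonempty := by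
  let a : E₁ → E₁ × E₂ := fun r => Ψ₁ (auxProj r, 0)
  let b : E₂ → E₁ × E₂ := fun s => Ψ₂ (0, auxProj s)
  have ha : Continuous a := hc₁.comp_continuous
    (auxProj_cont.prodMk continuous_const) fun x => ⟨auxProj_mem x, rfl⟩
  have hb : Continuous b := hc₂.comp_continuous
    (continuous_const.prodMk auxProj_cont) fun x => ⟨rfl, auxProj_mem x⟩
  have hP : Continuous (auxProj : E₁ → E₁) := auxProj_cont
  have hQ : Continuous (auxProj : E₂ → E₂) := auxProj_cont
  let F : WithLp 2 (E₁ × E₂) → WithLp 2 (E₁ × E₂) := fun z =>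
    WithLp.toLp 2 (auxProj z.fst - ((a z.fst).1 - (b z.snd).1),
      auxProj z.snd + ((a z.fst).2 - (b z.snd).2))
  have hfst : Continuous fun z : WithLp 2 (E₁ × E₂) => z.fst := (WithLp.fstL 2 ℝ E₁ E₂).continuous
  have hsnd : Continuous fun z : WithLp 2 (E₁ × E₂) => z.snd := (WithLp.sndL 2 ℝ E₁ E₂).continuous
  have hF : Continuous F := by
    refine (WithLp.prod_continuous_toLp 2 E₁ E₂).comp (Continuous.prodMk ?_ ?_)
    · exact (hP.comp hfst).sub ((continuous_fst.comp (ha.comp hfst)).sub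
        (continuous_fst.comp (hb.comp hsnd)))
    · exact (hQ.comp hsnd).add ((continuous_snd.comp (ha.comp hfst)).sub
        (continuous_snd.comp (hb.comp hsnd)))
  have hbd : ∀ z, ‖(F z).fst‖ + ‖(F z).snd‖ ≤ 1 / 2 := by
    intro z
    have e1 := h₁ (auxProj z.fst, 0) (auxProj_mem _) rfl
    have e2 := h₂ (0, auxProj z.snd) rfl (auxProj_mem _)
    have f1 : (F z).fst = ((b z.snd).1 - (0 + k₀.1)) - ((a z.fst).1 - (auxProj z.fst + k₀.1)) := by
      change auxProj z.fst - ((a z.fst).1 - (b z.snd).1) = _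
      abel
    have f2 : (F z).snd = ((a z.fst).2 - (0 + k₀.2)) - ((b z.snd).2 - (auxProj z.snd + k₀.2)) := by
      change auxProj z.snd + ((a z.fst).2 - (b z.snd).2) = _
      abel
    rw [f1, f2]
    have t1 := norm_sub_le ((b z.snd).1 - (0 + k₀.1)) ((a z.fst).1 - (auxProj z.fst + k₀.1))
    have t2 := norm_sub_le ((a z.fst).2 - (0 + k₀.2)) ((b z.snd).2 - (auxProj z.snd + k₀.2))
    simp only [a, b] at *
    linarith
  obtain ⟨z, hz⟩ := aux_brouwer F hF (fun z => by
    have h := WithLp.prod_norm_sq_eq_of_L2 (F z)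
    have h' := hbd z
    have := norm_nonneg (F z).fst
    have := norm_nonneg (F z).snd
    nlinarith [norm_nonneg (F z)])
  have hzb := hbd z
  rw [hz] at hzb
  have n1 : ‖z.fst‖ ≤ 1 := by linarith [norm_nonneg z.snd]
  have n2 : ‖z.snd‖ ≤ 1 := by linarith [norm_nonneg z.fst]
  have z1 : auxProj z.fst - ((a z.fst).1 - (b z.snd).1) = z.fst := congrArg WithLp.fst hz
  have z2 : auxProj z.snd + ((a z.fst).2 - (b z.snd).2) = z.snd := congrArg WithLp.snd hz
  rw [auxProj_id _ n1, sub_eq_self, sub_eq_zero] at z1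
  rw [auxProj_id _ n2, add_eq_left, sub_eq_zero] at z2
  refine ⟨a z.fst, ⟨(auxProj z.fst, 0), ⟨auxProj_mem z.fst, rfl⟩, rfl⟩, ⟨(0, auxProj z.snd), ⟨rfl, auxProj_mem z.snd⟩, ?_⟩⟩
  exact (Prod.ext z1 z2).symm

/-- Two continuous maps defined on the two "coordinate" closed unit balls of
`ℝ^{m₁} × ℝ^{m₂}`, each moving points by at most `1/4` away from a common translation
by `k₀` (in the norm `‖(x,y)‖ = ‖x‖ + ‖y‖`), have intersecting images. -/
theorem stmt1 (m₁ m₂ : ℕ)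
    (k₀ : EuclideanSpace ℝ (Fin m₁) × EuclideanSpace ℝ (Fin m₂))
    (Ψ₁ Ψ₂ : EuclideanSpace ℝ (Fin m₁) × EuclideanSpace ℝ (Fin m₂) →
      EuclideanSpace ℝ (Fin m₁) × EuclideanSpace ℝ (Fin m₂))
    (hc₁ : ContinuousOn Ψ₁ {x | x.1 ∈ Metric.closedBall 0 1 ∧ x.2 = 0})
    (hc₂ : ContinuousOn Ψ₂ {x | x.1 = 0 ∧ x.2 ∈ Metric.closedBall 0 1})
    (h₁ : ∀ r : EuclideanSpace ℝ (Fin m₁) × EuclideanSpace ℝ (Fin m₂),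
      r.1 ∈ Metric.closedBall 0 1 → r.2 = 0 →
      ‖(Ψ₁ r).1 - (r.1 + k₀.1)‖ + ‖(Ψ₁ r).2 - (r.2 + k₀.2)‖ ≤ 1 / 4)
    (h₂ : ∀ s : EuclideanSpace ℝ (Fin m₁) × EuclideanSpace ℝ (Fin m₂),
      s.1 = 0 → s.2 ∈ Metric.closedBall 0 1 →
      ‖(Ψ₂ s).1 - (s.1 + k₀.1)‖ + ‖(Ψ₂ s).2 - (s.2 + k₀.2)‖ ≤ 1 / 4) :
    ((Ψ₁ '' {x | x.1 ∈ Metric.closedBall 0 1 ∧ x.2 = 0}) ∩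
      (Ψ₂ '' {x | x.1 = 0 ∧ x.2 ∈ Metric.closedBall 0 1})).Nonempty := by
  exact aux_main k₀ Ψ₁ Ψ₂ hc₁ hc₂ h₁ h₂
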